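/- arXiv:1602.03113 — 6 statements merged into one kernel-verified Lean document; each statement's English description precedes it below -/
import Mathlib

section
/- Let a, b, c be positive integers. Let A ⊆ S³ be the S-submodule generated by the three vectors x^a y^b e₁, x^a z^c e₂, y^b z^c e₃ (where e₁, e₂, e₃ is the standard basis of S³), and let R₀ = A / ⟨x^a y^b z^c (e₁ + e₂ + e₃)⟩ be the quotient of A by the cyclic submodule generated by x^a y^b z^c (e₁ + e₂ + e₃). Then the S-linear map S³ → R₀ sending e₁, e₂, e₃ to the classes of x^a y^b e₁, x^a z^c e₂, y^b z^c e₃ respectively is surjective, and its kernel is exactly the cyclic submodule of S³ generated by the vector (z^c, y^b, x^a). Consequently R₀ is isomorphic to R(a,b,c) and there is a short exact sequence 0 → S → S³ → R₀ → 0 in which the first map sends 1 to (z^c, y^b, x^a). -/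
/-!
Write `p = x^a`, `q = y^b`, `r = z^c`. The map `f` sends `v` to the class of
`∑ vᵢ gᵢ = (v₀pq, v₁pr, v₂qr)`, and it is surjective because the `gᵢ` generate `A`. A vector `v` lies
in the kernel iff `(v₀pq, v₁pr, v₂qr) = s • (pqr, pqr, pqr)` for some `s`; as `S` is a domain and
`p, q, r ≠ 0`, cancelling coordinatewise turns this into `v = s • (r, q, p)`. The isomorphism with
`R(a,b,c)` is the first isomorphism theorem, and `s ↦ s • (r, q, p)` is injective because
`(r, q, p) ≠ 0` and `S³` is torsion-free.
-/

open MvPolynomial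

noncomputable section

/-- `S = ℂ[x,y,z]`. -/
abbrev S : Type := MvPolynomial (Fin 3) ℂ

/-- `R(a,b,c) = S³ / ⟨(z^c, y^b, x^a)⟩`. -/
abbrev Rabc (a b c : ℕ) : Type :=
  (Fin 3 → S) ⧸ Submodule.span S {![(X 2 : S) ^ c, (X 1 : S) ^ b, (X 0 : S) ^ a]}

/-- A linear map out of `R³` to a quotient of `A`, given on the standard basis by the classes of
`gᵢ ∈ A`, sends `v` to the class of `∑ vᵢ gᵢ`. -/
lemma apply_eq_mk_sum {R M : Type*} [CommRing R] [AddCommGroup M] [Module R M]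
    {A : Submodule R M} {B : Submodule R A} (g : Fin 3 → M) (hg : ∀ i, g i ∈ A)
    (f : (Fin 3 → R) →ₗ[R] (A ⧸ B))
    (hf : ∀ i : Fin 3, f (Pi.single i 1) = Submodule.Quotient.mk (⟨g i, hg i⟩ : A))
    (v : Fin 3 → R) :
    f v = Submodule.Quotient.mk (∑ i, v i • (⟨g i, hg i⟩ : A)) := by
  have hv : v = ∑ i, v i • Pi.single i (1 : R) := pi_eq_sum_univ' v
  conv_lhs => rw [hv]
  rw [map_sum, ← Submodule.mkQ_apply, map_sum]
  refine Finset.sum_congr rfl fun i _ => ?_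
  rw [map_smul, hf, map_smul, Submodule.mkQ_apply]

/-- Let `A ⊆ S³` be the submodule generated by `x^a y^b e₁`, `x^a z^c e₂`, `y^b z^c e₃`,
and let `R₀ = A / ⟨x^a y^b z^c (e₁+e₂+e₃)⟩`.  The `S`-linear map `S³ → R₀` sending
`e₁, e₂, e₃` to the classes of the three generators is surjective with kernel the cyclic
submodule generated by `(z^c, y^b, x^a)`; consequently `R₀ ≅ R(a,b,c)` and there is a
short exact sequence `0 → S → S³ → R₀ → 0` whose first map sends `1` to `(z^c, y^b, x^a)`. -/
theorem presentation_of_R0 (a b c : ℕ) (ha : 0 < a) (hb : 0 < b) (hc : 0 < c) :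
    ∀ x y z : S, x = X 0 → y = X 1 → z = X 2 →
    ∀ g : Fin 3 → (Fin 3 → S),
      g = ![![x ^ a * y ^ b, 0, 0], ![0, x ^ a * z ^ c, 0], ![0, 0, y ^ b * z ^ c]] →
    ∀ A : Submodule S (Fin 3 → S), A = Submodule.span S {g 0, g 1, g 2} →
    ∀ (hg : ∀ i, g i ∈ A)
      (hw : (x ^ a * y ^ b * z ^ c) • (![1, 1, 1] : Fin 3 → S) ∈ A),
    ∀ f : (Fin 3 → S) →ₗ[S] (A ⧸ Submodule.span S {(⟨_, hw⟩ : A)}),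
      (∀ i : Fin 3, f (Pi.single i 1) =
        Submodule.Quotient.mk (⟨g i, hg i⟩ : A)) →
    Function.Surjective f ∧
    LinearMap.ker f = Submodule.span S {![z ^ c, y ^ b, x ^ a]} ∧
    Nonempty ((A ⧸ Submodule.span S {(⟨_, hw⟩ : A)}) ≃ₗ[S] Rabc a b c) ∧
    Function.Injective (LinearMap.toSpanSingleton S (Fin 3 → S) ![z ^ c, y ^ b, x ^ a]) ∧
    LinearMap.range (LinearMap.toSpanSingleton S (Fin 3 → S) ![z ^ c, y ^ b, x ^ a]) =
      LinearMap.ker f := by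
  intro x y z hx hy hz g hgdef A hA hg hw f hf
  have hp : x ^ a ≠ 0 := pow_ne_zero _ (hx ▸ X_ne_zero _)
  have hq : y ^ b ≠ 0 := pow_ne_zero _ (hy ▸ X_ne_zero _)
  have hr : z ^ c ≠ 0 := pow_ne_zero _ (hz ▸ X_ne_zero _)
  have hfv := apply_eq_mk_sum g hg f hf
  have hsurj : Function.Surjective f := by
    intro t
    obtain ⟨⟨u, hu⟩, rfl⟩ := Submodule.Quotient.mk_surjective _ t
    have hu' := hu
    rw [hA, Submodule.mem_span_triple] at hu'
    obtain ⟨α, β, γ, h⟩ := hu'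
    refine ⟨![α, β, γ], ?_⟩
    rw [hfv]
    congr 1
    apply Subtype.ext
    simp [Fin.sum_univ_three, ← h]
  have hker : LinearMap.ker f = Submodule.span S {![z ^ c, y ^ b, x ^ a]} := by
    ext v
    rw [LinearMap.mem_ker, hfv, Submodule.Quotient.mk_eq_zero, Submodule.mem_span_singleton,
      Submodule.mem_span_singleton]
    refine exists_congr fun s => ?_
    rw [Subtype.ext_iff, funext_iff, funext_iff]
    simp only [Fin.forall_fin_succ, Fin.sum_univ_three, hgdef]
    simp
    refine and_congr ?_ (and_congr ?_ ?_)
    · rw [← mul_right_inj' (mul_ne_zero hp hq) (b := s * z ^ c)]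
      ring_nf
    · rw [← mul_right_inj' (mul_ne_zero hp hr) (b := s * y ^ b)]
      ring_nf
    · rw [← mul_right_inj' (mul_ne_zero hq hr) (b := s * x ^ a)]
      ring_nf
  refine ⟨hsurj, hker, ⟨?_⟩, ?_, ?_⟩
  · refine (f.quotKerEquivOfSurjective hsurj).symm.trans (Submodule.quotEquivOfEq _ _ ?_)
    rw [hker, hx, hy, hz]
  · intro s t h
    have h0 := congrFun h 0
    simpa [hr] using h0
  · rw [hker, LinearMap.range_toSpanSingleton]
end
end

section
/- Let a, b, c be positive integers. The module R(a,b,c) is reflexive: the canonical evaluation map R(a,b,c) → Hom_S(Hom_S(R(a,b,c), S), S) is bijective. -/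
/-!
Write `v = (z^c, y^b, x^a)` and `M = S³ / ⟨v⟩`. The entries of `v` form a regular sequence, so the
Koszul complex on `v` is exact in positive degrees; concretely:

* a vector `u` with `u ⬝ v = 0` is a cross product `w ⨯ v` (`exists_cross_eq`);
* a vector `n` with `n ⨯ v = 0` is a multiple of `v` (`exists_smul_eq`).

The dual of `M` consists of the vectors orthogonal to `v`, hence by the first point
`w ↦ (n ↦ (w ⨯ v) ⬝ n)` is a surjection `T : S³ → M*`. If `n` is killed by all of `M*`, then
`w ⬝ (v ⨯ n) = 0` for all `w`, so `n ⨯ v = 0` and `n ∈ ⟨v⟩`: the evaluation map is injective.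
Given `φ ∈ M**`, the functional `φ ∘ T` on `S³` is `w ↦ w ⬝ m` for some `m`, and `T v = 0` gives
`v ⬝ m = 0`. By the first point again `m = n ⨯ v`, so `φ (T w) = w ⬝ (n ⨯ v) = -(w ⨯ v) ⬝ n`, which
is the value of `T w` at the class of `-n`. As `T` is surjective, `φ` is evaluation at that class.
-/

open MvPolynomial

noncomputable section

section Koszul

open Matrix

variable {R : Type*} [CommRing R]

/-- Exactness of the Koszul complex of `v` at its degree-one term, for a regular sequence
`v 0, v 1, v 2` in a domain: every syzygy of `v` is a cross product with `v`. -/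
lemma exists_cross_eq [IsDomain R] (v : Fin 3 → R) (h0 : v 0 ≠ 0)
    (h01 : ∀ f, v 0 ∣ v 1 * f → v 0 ∣ f)
    (h2 : ∀ f, v 2 * f ∈ Ideal.span {v 0, v 1} → f ∈ Ideal.span {v 0, v 1})
    (u : Fin 3 → R) (hu : u ⬝ᵥ v = 0) : ∃ w : Fin 3 → R, w ⨯₃ v = u := by
  simp only [dotProduct, Fin.sum_univ_three] at hu
  obtain ⟨α, β, hαβ⟩ := Ideal.mem_span_pair.1 (h2 (u 2) (Ideal.mem_span_pair.2
    ⟨-u 0, -u 1, by linear_combination -hu⟩))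
  obtain ⟨γ, hγ⟩ := h01 (u 1 + β * v 2) ⟨-(u 0 + α * v 2), by
    linear_combination hu + v 2 * hαβ⟩
  have hγ' : u 0 + α * v 2 = -(v 1 * γ) := mul_left_cancel₀ h0 (by
    linear_combination hu + v 2 * hαβ - v 1 * hγ)
  refine ⟨![β, -α, γ], ?_⟩
  ext i
  fin_cases i
  · simp [cross_apply]; linear_combination -hγ'
  · simp [cross_apply]; linear_combination -hγ
  · simp [cross_apply]; linear_combination hαβ

/-- Exactness of the Koszul complex of `v` at its degree-two term: a vector whose cross product
with `v` vanishes is a multiple of `v`. -/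
lemma exists_smul_eq [IsDomain R] (v : Fin 3 → R) (h0 : v 0 ≠ 0)
    (h01 : ∀ f, v 0 ∣ v 1 * f → v 0 ∣ f)
    (n : Fin 3 → R) (hn : n ⨯₃ v = 0) : ∃ t : R, t • v = n := by
  have e1 := congrFun hn 1
  have e2 := congrFun hn 2
  simp [cross_apply] at e1 e2
  obtain ⟨t, ht⟩ := h01 (n 0) ⟨n 1, by linear_combination e2⟩
  refine ⟨t, ?_⟩
  ext i
  fin_cases i
  · simp; linear_combination -ht
  · exact mul_left_cancel₀ h0 (by
      change v 0 * (t * v 1) = v 0 * n 1; linear_combination e2 - v 1 * ht)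
  · exact mul_left_cancel₀ h0 (by
      change v 0 * (t * v 2) = v 0 * n 2; linear_combination -e1 - v 2 * ht)

/-- The map `T : R³ → (R³ / ⟨v⟩)*` sending `w` to the functional `n ↦ (w ⨯ v) ⬝ n`. -/
def crossDual (v : Fin 3 → R) :
    (Fin 3 → R) →ₗ[R] Module.Dual R ((Fin 3 → R) ⧸ Submodule.span R {v}) where
  toFun w := (Submodule.span R {v}).liftQ (dotProductEquiv R (Fin 3) (w ⨯₃ v)) (by
    rw [Submodule.span_singleton_le_iff_mem, LinearMap.mem_ker, dotProductEquiv_apply_apply,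
      dotProduct_comm, dot_cross_self])
  map_add' w w' := by
    apply Submodule.linearMap_qext
    rw [Submodule.liftQ_mkQ]
    ext : 1
    simp
    rfl
  map_smul' r w := by
    apply Submodule.linearMap_qext
    rw [Submodule.liftQ_mkQ]
    ext : 1
    simp
    rfl

lemma crossDual_mk (v w n : Fin 3 → R) :
    crossDual v w (Submodule.Quotient.mk n) = (w ⨯₃ v) ⬝ᵥ n := rfl

lemma crossDual_surjective (v : Fin 3 → R)
    (hv : ∀ u : Fin 3 → R, u ⬝ᵥ v = 0 → ∃ w : Fin 3 → R, w ⨯₃ v = u) :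
    Function.Surjective (crossDual v) := by
  intro f
  set u := (dotProductEquiv R (Fin 3)).symm (f ∘ₗ Submodule.mkQ _) with hu
  have key (n : Fin 3 → R) : u ⬝ᵥ n = f (Submodule.Quotient.mk n) := by
    rw [← dotProductEquiv_apply_apply, hu, LinearEquiv.apply_symm_apply]; rfl
  obtain ⟨w, hw⟩ := hv u (by
    rw [key, (Submodule.Quotient.mk_eq_zero _).2 (Submodule.mem_span_singleton_self v), map_zero])
  refine ⟨w, ?_⟩
  apply LinearMap.ext
  intro q
  obtain ⟨n, rfl⟩ := Submodule.Quotient.mk_surjective _ q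
  rw [crossDual_mk, hw, key]

/-- If the Koszul complex of `v` is exact in degrees one (`h1`) and two (`h2`), then `R³ / ⟨v⟩` is
reflexive. -/
lemma bijective_eval_of_koszul (v : Fin 3 → R)
    (h1 : ∀ u : Fin 3 → R, u ⬝ᵥ v = 0 → ∃ w : Fin 3 → R, w ⨯₃ v = u)
    (h2 : ∀ n : Fin 3 → R, n ⨯₃ v = 0 → ∃ t : R, t • v = n) :
    Function.Bijective (Module.Dual.eval R ((Fin 3 → R) ⧸ Submodule.span R {v})) := by
  constructor
  · rw [injective_iff_map_eq_zero]
    intro q hq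
    obtain ⟨n, rfl⟩ := Submodule.Quotient.mk_surjective _ q
    rw [Submodule.Quotient.mk_eq_zero, Submodule.mem_span_singleton]
    refine h2 n ?_
    rw [← dotProduct_eq_zero_iff]
    intro w
    have := LinearMap.congr_fun hq (crossDual v w)
    rw [Module.Dual.eval_apply, crossDual_mk, LinearMap.zero_apply, dotProduct_comm,
      triple_product_permutation, ← cross_anticomm, dotProduct_neg, neg_eq_zero] at this
    rw [dotProduct_comm, this]
  · intro φ
    set m := (dotProductEquiv R (Fin 3)).symm (φ ∘ₗ crossDual v) with hm
    have key (w : Fin 3 → R) : m ⬝ᵥ w = φ (crossDual v w) := by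
      rw [← dotProductEquiv_apply_apply, hm, LinearEquiv.apply_symm_apply]; rfl
    have hTv : crossDual v v = 0 := by
      apply LinearMap.ext
      intro q
      obtain ⟨n, rfl⟩ := Submodule.Quotient.mk_surjective _ q
      rw [crossDual_mk, cross_self, zero_dotProduct, LinearMap.zero_apply]
    obtain ⟨n, hn⟩ := h1 m (by rw [key, hTv, map_zero])
    refine ⟨Submodule.Quotient.mk (-n), ?_⟩
    apply LinearMap.ext
    intro f
    obtain ⟨w, rfl⟩ := crossDual_surjective v h1 f
    rw [Module.Dual.eval_apply, crossDual_mk, ← key, ← hn, dotProduct_neg, dotProduct_comm,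
      dotProduct_comm _ w, triple_product_permutation w, ← cross_anticomm, dotProduct_neg,
      neg_neg]

end Koszul

lemma X_pow_dvd_of_dvd_mul {i j : Fin 3} (hij : i ≠ j) (m n : ℕ) (f : S)
    (h : (X i : S) ^ m ∣ X j ^ n * f) : (X i : S) ^ m ∣ f := by
  refine (X_prime (R := ℂ)).pow_dvd_of_dvd_mul_left m (fun hd => hij ?_) h
  simpa [X_dvd_X] using (X_prime (R := ℂ)).dvd_of_dvd_pow hd

/-- `x^a` is a nonzerodivisor modulo `(z^c, y^b)`: membership in this monomial ideal is decided
monomial by monomial, and multiplying by `x^a` changes neither the `y`- nor the `z`-exponent. -/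
lemma mem_span_of_X_pow_mul_mem (a b c : ℕ) (f : S)
    (h : (X 0 : S) ^ a * f ∈ Ideal.span {(X 2 : S) ^ c, (X 1 : S) ^ b}) :
    f ∈ Ideal.span {(X 2 : S) ^ c, (X 1 : S) ^ b} := by
  have hs : ({(X 2 : S) ^ c, (X 1 : S) ^ b} : Set S) = (fun s => monomial s (1 : ℂ)) ''
      {Finsupp.single 2 c, Finsupp.single 1 b} := by
    simp [Set.image_pair, X_pow_eq_monomial]
  rw [hs, mem_ideal_span_monomial_image] at h ⊢
  intro d hd
  obtain ⟨s, hsm, hle⟩ := h (Finsupp.single 0 a + d) (by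
    rw [mem_support_iff] at hd ⊢
    rwa [X_pow_eq_monomial, coeff_monomial_mul, one_mul])
  refine ⟨s, hsm, ?_⟩
  rcases hsm with rfl | rfl <;> simpa using hle

/-- The module `R(a,b,c)` is reflexive: the canonical evaluation map into its double dual
is bijective. -/
theorem Rabc_reflexive (a b c : ℕ) (ha : 0 < a) (hb : 0 < b) (hc : 0 < c) :
    Function.Bijective (Module.Dual.eval S (Rabc a b c)) := by
  have h0 : (X 2 : S) ^ c ≠ 0 := pow_ne_zero _ (X_ne_zero _)
  have h01 (f : S) : (X 2 : S) ^ c ∣ X 1 ^ b * f → (X 2 : S) ^ c ∣ f :=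
    X_pow_dvd_of_dvd_mul (by decide) c b f
  exact bijective_eval_of_koszul _
    (exists_cross_eq _ h0 h01 (mem_span_of_X_pow_mul_mem a b c)) (exists_smul_eq _ h0 h01)
end
end

section
/- Let a, b, c be positive integers. There is an isomorphism of S-modules Ext¹_S(R(a,b,c), S) ≅ S/(x^a, y^b, z^c), and this module has dimension a·b·c as a ℂ-vector space. -/
/-!
The vector `v = (z ^ c, y ^ b, x ^ a)` is nonzero and `S` is a domain, so
`0 → S → S³ → R(a,b,c) → 0`, with first map `1 ↦ v`, is a free resolution of length one
(`twoTermResolution`). Applying `Hom(-, S)`, the group `Ext¹` is the cokernel of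
`Hom(S³, S) → Hom(S, S) ≅ S`, `ψ ↦ ψ v`, whose image is the ideal generated by the entries of `v`
(`nonempty_ext_one_quotient_span_singleton`).

For the dimension, a polynomial lies in the monomial ideal `(x ^ a, y ^ b, z ^ c)` exactly when its
coefficients at all `x ^ i * y ^ j * z ^ k` with `i < a`, `j < b`, `k < c` vanish, so reading off
these coefficients identifies the quotient with a space of dimension `a * b * c` (`ker_boxCoeff`,
`boxCoeff_surjective`).
-/

open MvPolynomial CategoryTheory

noncomputable section

namespace RabcExt

open Limits ZeroObject

section Resolution

variable {C : Type*} [Category* C] [Abelian C] {P₁ P₀ M : C}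

variable (P₁ P₀) in
/-- The objects `P₀, P₁, 0, 0, …` of `twoTerm`. -/
def twoTermX : ℕ → C
  | 0 => P₀
  | 1 => P₁
  | _ + 2 => 0

/-- The differentials `f, 0, 0, …` of `twoTerm`. -/
def twoTermD (f : P₁ ⟶ P₀) : ∀ n, twoTermX P₁ P₀ (n + 1) ⟶ twoTermX P₁ P₀ n
  | 0 => f
  | _ + 1 => 0

/-- The chain complex `⋯ → 0 → 0 → P₁ → P₀` attached to a morphism `P₁ ⟶ P₀`. -/
def twoTerm (f : P₁ ⟶ P₀) : ChainComplex C ℕ :=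
  ChainComplex.of (twoTermX P₁ P₀) (twoTermD f) (fun _ => zero_comp)

lemma twoTerm_d_one_zero (f : P₁ ⟶ P₀) : (twoTerm f).d 1 0 = f :=
  ChainComplex.of_d (X := twoTermX P₁ P₀) (d := twoTermD f) 0

lemma twoTerm_isZero (f : P₁ ⟶ P₀) (n : ℕ) : IsZero ((twoTerm f).X (n + 2)) :=
  isZero_zero C

lemma twoTerm_exactAt_succ (f : P₁ ⟶ P₀) [Mono f] (n : ℕ) :
    (twoTerm f).ExactAt (n + 1) := by
  rw [HomologicalComplex.exactAt_iff' _ (n + 1 + 1) (n + 1) n (by simp) (by simp)]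
  cases n with
  | zero =>
    refine (ShortComplex.exact_iff_mono _ ((twoTerm_isZero f 0).eq_of_src _ _)).2 ?_
    change Mono ((twoTerm f).d 1 0)
    rw [twoTerm_d_one_zero]
    assumption
  | succ n => exact ShortComplex.exact_of_isZero_X₂ _ (twoTerm_isZero f n)

/-- A short exact sequence `0 → P₁ → P₀ → M → 0` with `P₁`, `P₀` projective, seen as a
projective resolution of `M`. -/
def twoTermResolution (f : P₁ ⟶ P₀) (g : P₀ ⟶ M) [Projective P₁] [Projective P₀]
    (w : f ≫ g = 0) (h : (ShortComplex.mk f g w).ShortExact) : ProjectiveResolution M where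
  complex := twoTerm f
  projective n := match n with
    | 0 => inferInstanceAs (Projective P₀)
    | 1 => inferInstanceAs (Projective P₁)
    | n + 2 => (twoTerm_isZero f n).projective
  π := (ChainComplex.toSingle₀Equiv _ _).symm ⟨g, by rw [twoTerm_d_one_zero]; exact w⟩
  quasiIso := ⟨fun n => by
    cases n
    · rw [ChainComplex.quasiIsoAt₀_iff, ShortComplex.quasiIso_iff_of_zeros']
      · refine (ShortComplex.exact_and_epi_g_iff_of_iso ?_).2 ⟨h.exact, h.epi_g⟩
        exact ShortComplex.isoMk (Iso.refl _) (Iso.refl _) (Iso.refl _)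
          ((Category.id_comp _).trans
            ((twoTerm_d_one_zero f).symm.trans (Category.comp_id _).symm))
          ((Category.id_comp _).trans (Eq.trans (ChainComplex.toSingle₀Equiv_symm_apply_f_zero (C := twoTerm f) g _).symm
            (Category.comp_id _).symm))
      all_goals rfl
    · have := h.mono_f
      rw [quasiIsoAt_iff_exactAt']
      · apply twoTerm_exactAt_succ
      · apply ChainComplex.exactAt_succ_single_obj⟩

end Resolution

section Homology

variable {R : Type*} [CommRing R]

/-- When the second map vanishes, homology is the cokernel of the first map; here the cokernel is
presented by a surjection `q` with the right kernel. -/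
lemma nonempty_homology_equiv (T : ShortComplex (ModuleCat R)) (hg : T.g = 0)
    {Q : Type*} [AddCommGroup Q] [Module R Q] (q : T.X₂ →ₗ[R] Q)
    (hq : Function.Surjective q) (hker : LinearMap.ker q = LinearMap.range T.f.hom) :
    Nonempty (T.homology ≃ₗ[R] Q) := by
  let q' : LinearMap.ker T.g.hom →ₗ[R] Q := q ∘ₗ (LinearMap.ker T.g.hom).subtype
  have hq' : Function.Surjective q' := fun y => by
    obtain ⟨x, rfl⟩ := hq y
    exact ⟨⟨x, by simp [hg]⟩, rfl⟩
  have hk : LinearMap.range T.moduleCatToCycles = LinearMap.ker q' := by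
    ext ⟨x, hx⟩
    have : x ∈ LinearMap.ker q ↔ x ∈ LinearMap.range T.f.hom := by rw [hker]
    simpa [q', Subtype.ext_iff] using! this.symm
  exact ⟨T.moduleCatHomologyIso.toLinearEquiv ≪≫ₗ
    Submodule.quotEquivOfEq _ _ hk ≪≫ₗ q'.quotKerEquivOfSurjective hq'⟩

end Homology

section ExtOne

universe u
variable {R : Type u} [CommRing R]

/-- For a projective resolution `0 → P₁ → P₀ → M → 0`, the module `Ext¹(M, N)` is the cokernel of
`Hom(P₀, N) → Hom(P₁, N)`, presented by a surjection `q` with the right kernel. -/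
lemma nonempty_ext_one_equiv {P₁ P₀ M N : ModuleCat.{u} R} (f : P₁ ⟶ P₀) (g : P₀ ⟶ M)
    [Projective P₁] [Projective P₀]
    (w : f ≫ g = 0) (h : (ShortComplex.mk f g w).ShortExact)
    {Q : Type*} [AddCommGroup Q] [Module R Q] (q : (P₁ ⟶ N) →ₗ[R] Q)
    (hq : Function.Surjective q)
    (hker : ∀ φ : P₁ ⟶ N, q φ = 0 ↔ ∃ ψ : P₀ ⟶ N, f ≫ ψ = φ) :
    Nonempty ((((Ext R (ModuleCat.{u} R) 1).obj (Opposite.op M)).obj N) ≃ₗ[R] Q) := by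
  let K := (twoTerm f).linearYonedaObj R N
  have e : ((Ext R (ModuleCat.{u} R) 1).obj (Opposite.op M)).obj N ≅ (K.sc' 0 1 2).homology :=
    (twoTermResolution f g w h).isoExt 1 N ≪≫ K.homologyIsoSc' 0 1 2 (by simp) (by simp)
  have hg : (K.sc' 0 1 2).g = 0 := by
    ext (φ : (twoTerm f).X 1 ⟶ N)
    exact (twoTerm_isZero f 0).eq_of_src _ _
  obtain ⟨e'⟩ := nonempty_homology_equiv (K.sc' 0 1 2) hg (Q := Q) q hq (by
    ext (φ : P₁ ⟶ N)
    refine (hker φ).trans (exists_congr fun ψ => ?_)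
    have : (K.sc' 0 1 2).f.hom ψ = f ≫ ψ := by
      change (twoTerm f).d 1 0 ≫ _ = _
      rw [twoTerm_d_one_zero]
      rfl
    exact ⟨fun h => this.trans h, fun h => this.symm.trans h⟩)
  exact ⟨e.toLinearEquiv ≪≫ₗ e'⟩

/-- `Hom(Rⁿ, R) → Hom(R, R) ≅ R` sends `ψ` to `ψ v`, so its image is the ideal generated by the
entries of `v`; `v ≠ 0` makes `R → Rⁿ`, `1 ↦ v` injective. -/
lemma nonempty_ext_one_quotient_span_singleton [IsDomain R] {ι : Type} [Fintype ι]
    (v : ι → R) (hv : v ≠ 0) :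
    Nonempty ((((Ext R (ModuleCat.{u} R) 1).obj
      (Opposite.op (ModuleCat.of R ((ι → R) ⧸ Submodule.span R {v})))).obj (ModuleCat.of R R))
        ≃ₗ[R] R ⧸ Ideal.span (Set.range v)) := by
  classical
  let f : R →ₗ[R] (ι → R) := LinearMap.toSpanSingleton R _ v
  let g := (Submodule.span R {v}).mkQ
  have hfg : Function.Exact f g := by
    rw [LinearMap.exact_iff, Submodule.ker_mkQ, LinearMap.range_toSpanSingleton]
  have hf : Function.Injective f := smul_left_injective R hv
  have hg : Function.Surjective g := Submodule.mkQ_surjective _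
  let q : (ModuleCat.of R R ⟶ ModuleCat.of R R) →ₗ[R] R ⧸ Ideal.span (Set.range v) :=
    { toFun φ := Submodule.Quotient.mk (φ.hom 1)
      map_add' _ _ := rfl
      map_smul' _ _ := rfl }
  have : Projective (ModuleCat.of R (ι → R)) := ModuleCat.projective_of_free (Pi.basisFun R ι)
  have : Projective (ModuleCat.of R R) :=
    ModuleCat.projective_of_free (Module.Basis.singleton Unit R)
  refine nonempty_ext_one_equiv (ModuleCat.ofHom f) (ModuleCat.ofHom g)
    (by ext1; exact hfg.linearMap_comp_eq_zero)
    (ModuleCat.shortComplex_shortExact _ hfg hf hg) q (fun y => ?_) (fun φ => ?_)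
  · obtain ⟨y, rfl⟩ := Submodule.Quotient.mk_surjective _ y
    exact ⟨ModuleCat.ofHom (LinearMap.toSpanSingleton R R y),
      congrArg Submodule.Quotient.mk (one_smul R y)⟩
  · change Submodule.Quotient.mk (φ.hom 1) = 0 ↔ _
    rw [Submodule.Quotient.mk_eq_zero]
    change _ ∈ Submodule.span R (Set.range v) ↔ _
    rw [Submodule.mem_span_range_iff_exists_fun]
    have key (ψ : (ι → R) →ₗ[R] R) : ψ v = ∑ i, ψ (Pi.single i 1) * v i := by
      conv_lhs => rw [pi_eq_sum_univ' v]
      simp [mul_comm]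
    constructor
    · rintro ⟨c, hc⟩
      refine ⟨ModuleCat.ofHom (Fintype.linearCombination R c), ?_⟩
      ext1
      refine LinearMap.ext_ring ?_
      simp [f, Fintype.linearCombination_apply, ← hc, mul_comm]
    · rintro ⟨ψ, rfl⟩
      refine ⟨fun i => ψ.hom (Pi.single i 1), ?_⟩
      simpa [f] using (key ψ.hom).symm

end ExtOne

section Dimension

/-- The exponent of the monomial `x ^ i * y ^ j * z ^ k`. -/
def boxExponent {a b c : ℕ} (p : Fin a × Fin b × Fin c) : Fin 3 →₀ ℕ :=
  Finsupp.equivFunOnFinite.symm ![p.1, p.2.1, p.2.2]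

lemma boxExponent_injective {a b c : ℕ} :
    Function.Injective (boxExponent : Fin a × Fin b × Fin c → Fin 3 →₀ ℕ) := by
  rintro ⟨i, j, k⟩ ⟨i', j', k'⟩ h
  have h0 := DFunLike.congr_fun h 0
  have h1 := DFunLike.congr_fun h 1
  have h2 := DFunLike.congr_fun h 2
  simp [boxExponent] at h0 h1 h2
  simp [Fin.ext_iff, h0, h1, h2]

/-- The coefficients of a polynomial at the monomials `x ^ i * y ^ j * z ^ k` with
`i < a`, `j < b`, `k < c`. -/
def boxCoeff (a b c : ℕ) : S →ₗ[ℂ] (Fin a × Fin b × Fin c → ℂ) :=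
  LinearMap.pi fun p => MvPolynomial.lcoeff ℂ (boxExponent p)

lemma boxCoeff_surjective (a b c : ℕ) : Function.Surjective (boxCoeff a b c) := by
  intro g
  refine ⟨∑ p, monomial (boxExponent p) (g p), ?_⟩
  ext p
  simp [boxCoeff, coeff_monomial, boxExponent_injective.eq_iff]

/-- A polynomial lies in a monomial ideal iff each of its monomials is divisible by a generator;
the monomials divisible by none of `x ^ a`, `y ^ b`, `z ^ c` are those in the box. -/
lemma ker_boxCoeff (a b c : ℕ) :
    LinearMap.ker (boxCoeff a b c) =
      (Ideal.span {(X 0 : S) ^ a, (X 1 : S) ^ b, (X 2 : S) ^ c}).restrictScalars ℂ := by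
  have hset : ({(X 0 : S) ^ a, (X 1 : S) ^ b, (X 2 : S) ^ c} : Set S) =
      (fun s => monomial s (1 : ℂ)) ''
        {Finsupp.single 0 a, Finsupp.single 1 b, Finsupp.single 2 c} := by
    simp [Set.image_insert_eq, X_pow_eq_monomial]
  ext p
  rw [Submodule.restrictScalars_mem, hset, mem_ideal_span_monomial_image]
  simp only [LinearMap.mem_ker, Set.mem_insert_iff, Set.mem_singleton_iff, exists_eq_or_imp,
    exists_eq_left, Finsupp.single_le_iff, mem_support_iff]
  constructor
  · intro h m hm
    by_contra! hlt
    have := congrFun h (⟨m 0, hlt.1⟩, ⟨m 1, hlt.2.1⟩, ⟨m 2, hlt.2.2⟩)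
    refine hm ?_
    refine Eq.trans ?_ this
    change _ = coeff _ p
    congr 1
    ext i
    fin_cases i <;> rfl
  · intro h
    ext ⟨i, j, k⟩
    by_contra hne
    have := h _ hne
    simp [boxExponent] at this
    omega

end Dimension

end RabcExt

/-- `Ext¹_S(R(a,b,c), S) ≅ S/(x^a, y^b, z^c)` as `S`-modules, and the latter has
`ℂ`-dimension `a·b·c`. -/
theorem ext_one_Rabc (a b c : ℕ) (ha : 0 < a) (hb : 0 < b) (hc : 0 < c) :
    Nonempty ((((Ext S (ModuleCat S) 1).obj
        (Opposite.op (ModuleCat.of S (Rabc a b c)))).obj (ModuleCat.of S S)) ≃ₗ[S]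
      S ⧸ Ideal.span {(X 0 : S) ^ a, (X 1 : S) ^ b, (X 2 : S) ^ c}) ∧
    Module.finrank ℂ (S ⧸ Ideal.span {(X 0 : S) ^ a, (X 1 : S) ^ b, (X 2 : S) ^ c})
      = a * b * c := by
  constructor
  · have hI : Set.range ![(X 2 : S) ^ c, (X 1 : S) ^ b, (X 0 : S) ^ a] =
        {(X 0 : S) ^ a, (X 1 : S) ^ b, (X 2 : S) ^ c} := by
      ext p
      simp
    rw [← hI]
    refine RabcExt.nonempty_ext_one_quotient_span_singleton _ fun h => ?_
    exact pow_ne_zero c (X_ne_zero (2 : Fin 3)) (congrFun h 0)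
  · have e := (Submodule.quotEquivOfEq _ _ (RabcExt.ker_boxCoeff a b c)).symm ≪≫ₗ
      (RabcExt.boxCoeff a b c).quotKerEquivOfSurjective (RabcExt.boxCoeff_surjective a b c)
    refine (LinearEquiv.finrank_eq (M := S ⧸ Ideal.span _) e).trans ?_
    simp [mul_assoc]
end
end

section
/- Let R be a finitely generated reflexive S-module of rank r, and let Q be a finitely generated S-module of finite length (i.e. finite-dimensional as a ℂ-vector space). Then Ext^i_S(R, Q) = 0 for all i ≥ 2, and dim_ℂ Hom_S(R, Q) − dim_ℂ Ext¹_S(R, Q) = r · dim_ℂ Q. -/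
/-!
The ring `S` has global dimension `3`, and a reflexive module `R` is a second syzygy: dualizing a
presentation of its dual exhibits `R ≅ R**` as the kernel of a map between finite free modules.
Hence `R` has projective dimension at most `3 - 2 = 1`, and there is a short exact sequence
`0 → X → F → R → 0` with `F` finite free and `X` finite projective. It is a projective resolution
of length one, so `Ext^i(R, Q) = 0` for `i ≥ 2`, and
`0 → Hom(R, Q) → Hom(F, Q) → Hom(X, Q) → Ext¹(R, Q) → 0` is exact.

For a finite projective module `P` of rank `n`, `dim Hom(P, Q) = n · dim Q`: the ring
`B = S / ann Q` is finite-dimensional, hence semilocal, so `B ⊗ P`, which is flat of constant rank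
`n` because `S` is a domain, is free of rank `n`, and `Hom_S(P, Q) = Hom_B(B ⊗ P, Q) ≅ Q^n`.
Counting dimensions in the exact sequence, with additivity of the rank on
`0 → X → F → R → 0`, gives the formula.

The carrying lemmas are `GlDim.mvPolynomial` (a polynomial ring in `n` variables over a field has
global dimension at most `n`), `GlDim.reflexive` (the bound on the projective dimension),
`TwoTerm.isZero_ext` and `TwoTerm.exists_ext_one` (Ext from a resolution of length one) and
`RankHom.exists_equiv` (the computation of `Hom(P, Q)`). They are combined in `Assemble.main`.
-/

open MvPolynomial CategoryTheory TensorProduct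

noncomputable section

/-! ### Ext from a projective resolution of length one -/

namespace TwoTerm

open Limits ZeroObject
universe v u
variable {C : Type u} [Category.{v} C] [Abelian C] (T : ShortComplex C)

/-- The objects of the complex `⋯ → 0 → T.X₁ → T.X₂`, with `T.X₂` in degree `0`. -/
def X : ℕ → C
  | 0 => T.X₂
  | 1 => T.X₁
  | _ + 2 => 0

/-- The differentials of the complex `⋯ → 0 → T.X₁ → T.X₂`. -/
def d : ∀ n, X T (n + 1) ⟶ X T n
  | 0 => T.f
  | _ + 1 => 0

/-- The two-term chain complex `⋯ → 0 → T.X₁ → T.X₂`. -/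
def cx : ChainComplex C ℕ := ChainComplex.of (X T) (d T) (fun n => by simp [d])

lemma cx_d (n : ℕ) : (cx T).d (n + 1) n = d T n := ChainComplex.of_d _ _ n

lemma isZero_cx (n : ℕ) : IsZero ((cx T).X (n + 2)) := isZero_zero C

lemma cx_d_comp : (cx T).d 1 0 ≫ (show (cx T).X 0 ⟶ T.X₃ from T.g) = 0 := by
  rw [cx_d]; exact T.zero

lemma exact_f (hT : T.ShortExact) : (cx T).ExactAt 1 := by
  rw [HomologicalComplex.exactAt_iff' _ 2 1 0 (by simp) (by simp)]
  have : Mono ((cx T).sc' 2 1 0).g := by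
    have := hT.mono_f
    change Mono ((cx T).d 1 0)
    rw [cx_d]
    exact this
  rw [ShortComplex.exact_iff_mono _ ((isZero_cx T 0).eq_of_src _ _)]
  exact this

/-- A short exact sequence `0 → T.X₁ → T.X₂ → T.X₃ → 0` with `T.X₁`, `T.X₂` projective is a
projective resolution of `T.X₃`. -/
def res (hT : T.ShortExact) (h₁ : Projective T.X₁) (h₂ : Projective T.X₂) :
    ProjectiveResolution T.X₃ where
  complex := cx T
  projective n := match n with
    | 0 => h₂
    | 1 => h₁
    | _ + 2 => inferInstanceAs (Projective (0 : C))
  π := ((cx T).toSingle₀Equiv T.X₃).symm ⟨T.g, cx_d_comp T⟩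
  quasiIso := ⟨fun n => by
    have := hT.epi_g
    match n with
    | 0 =>
      rw [ChainComplex.quasiIsoAt₀_iff, ShortComplex.quasiIso_iff_of_zeros']
      · refine (ShortComplex.exact_and_epi_g_iff_of_iso ?_).2
          ⟨hT.exact, hT.epi_g⟩
        refine ShortComplex.isoMk (Iso.refl _) (Iso.refl _) (Iso.refl _) ?_ ?_
        · refine (Category.id_comp _).trans (Eq.trans ?_ (Category.comp_id _).symm)
          exact (cx_d T 0).symm
        · refine (Category.id_comp _).trans (Eq.trans ?_ (Category.comp_id _).symm)
          exact (ChainComplex.toSingle₀Equiv_symm_apply_f_zero _ (cx_d_comp T)).symm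
      all_goals rfl
    | 1 =>
      rw [quasiIsoAt_iff_exactAt']
      · exact exact_f T hT
      · apply ChainComplex.exactAt_succ_single_obj
    | n + 2 =>
      rw [quasiIsoAt_iff_exactAt']
      · exact ShortComplex.exact_of_isZero_X₂ _ (isZero_cx T n)
      · exact ChainComplex.exactAt_succ_single_obj ..⟩
open ModuleCat

variable {A : Type*} [Ring A] [Linear A C]

lemma isZero_yo (Y : C) (n : ℕ) : IsZero (((cx T).linearYonedaObj A Y).X (n + 2)) := by
  rw [isZero_iff_subsingleton]
  exact ⟨fun f g => (isZero_cx T n).eq_of_src f g⟩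

variable [EnoughProjectives C]

lemma isZero_ext (hT : T.ShortExact) (h₁ : Projective T.X₁) (h₂ : Projective T.X₂) (Y : C)
    (n : ℕ) :
    IsZero (((Ext A C (n + 2)).obj (Opposite.op T.X₃)).obj Y) := by
  refine IsZero.of_iso ?_ ((res T hT h₁ h₂).isoExt (n + 2) Y)
  rw [← HomologicalComplex.exactAt_iff_isZero_homology, HomologicalComplex.exactAt_iff]
  exact ShortComplex.exact_of_isZero_X₂ _ (isZero_yo T Y n)

/-- The connecting map of the long exact Ext sequence: `Ext¹(T.X₃, Y)` is the cokernel of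
`Hom(T.X₂, Y) → Hom(T.X₁, Y)`. -/
lemma exists_ext_one (hT : T.ShortExact) (h₁ : Projective T.X₁) (h₂ : Projective T.X₂) (Y : C) :
    ∃ δ : (T.X₁ ⟶ Y) →ₗ[A] (((Ext A C 1).obj (Opposite.op T.X₃)).obj Y),
      Function.Surjective δ ∧ LinearMap.ker δ = LinearMap.range (Linear.leftComp A Y T.f) := by
  let K := (cx T).linearYonedaObj A Y
  let e : ((Ext A C 1).obj (Opposite.op T.X₃)).obj Y ≅ (K.sc' 0 1 2).homology :=
    (res T hT h₁ h₂).isoExt 1 Y ≪≫ K.homologyIsoSc' 0 1 2 (by simp) (by simp)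
  let S' := K.sc' 0 1 2
  -- The complex vanishes in degree `2`, so the homology in degree `1` is a cokernel.
  have hg : S'.g = 0 := (isZero_yo T Y 0).eq_of_tgt _ _
  have : IsIso S'.homologyι := S'.isIso_homologyι hg
  let j : S'.opcycles ≅ ((Ext A C 1).obj (Opposite.op T.X₃)).obj Y :=
    (asIso S'.homologyι).symm ≪≫ e.symm
  let q : S'.X₂ ⟶ ((Ext A C 1).obj (Opposite.op T.X₃)).obj Y := S'.pOpcycles ≫ j.hom
  have hq : Epi q := inferInstance
  have hf : S'.f.hom = Linear.leftComp A Y T.f := by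
    ext φ
    exact congrArg (· ≫ φ) (cx_d T 0)
  refine ⟨q.hom, (ModuleCat.epi_iff_surjective q).1 hq, ?_⟩
  have key : LinearMap.ker q.hom = LinearMap.range S'.f.hom := by
    ext φ
    rw [← ShortComplex.moduleCat_pOpcycles_eq_zero_iff]
    have hj : Function.Injective j.hom :=
      (ModuleCat.mono_iff_injective _).1 inferInstance
    exact map_eq_zero_iff j.hom.hom hj
  rw [← hf]
  exact key
end TwoTerm

/-! ### Global dimension of polynomial rings, and reflexive modules -/

namespace GlDim

/-- `A` has global dimension at most `n`. Both `A` and the modules are taken in `Type`. -/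
def GlDimLE (A : Type) [CommRing A] (n : ℕ) : Prop :=
  ∀ M : ModuleCat.{0} A, HasProjectiveDimensionLE M n

lemma of_field (k : Type) [Field k] : GlDimLE k 0 := fun M => by
  rw [← projective_iff_hasProjectiveDimensionLE_zero, ← IsProjective.iff_projective]
  exact Module.Projective.of_basis (Module.Basis.ofVectorSpace k M)

attribute [local instance] RingHomInvPair.of_ringEquiv in
lemma of_ringEquiv {A B : Type} [CommRing A] [CommRing B] (e : A ≃+* B) {n : ℕ}
    (h : GlDimLE A n) : GlDimLE B n := fun N => by
  let M : ModuleCat A := (ModuleCat.restrictScalars e.toRingHom).obj N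
  have := h M
  let e' : M ≃ₛₗ[RingHomClass.toRingHom e] N :=
    { AddEquiv.refl N with
      map_smul' := fun r x => rfl }
  exact ModuleCat.hasProjectiveDimensionLE_of_semiLinearEquiv e e' n

lemma shortExact {A : Type} [CommRing A] {X Y Z : Type} [AddCommGroup X] [AddCommGroup Y]
    [AddCommGroup Z] [Module A X] [Module A Y] [Module A Z] {f : X →ₗ[A] Y} {g : Y →ₗ[A] Z}
    (hf : Function.Injective f) (hfg : Function.Exact f g) (hg : Function.Surjective g) :
    (ShortComplex.moduleCatMk f g hfg.linearMap_comp_eq_zero).ShortExact where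
  exact := (ShortComplex.ShortExact.moduleCat_exact_iff_function_exact _).2 hfg
  mono_f := (ModuleCat.mono_iff_injective _).2 hf
  epi_g := (ModuleCat.epi_iff_surjective _).2 hg

lemma baseChange_exact {A B : Type} [CommRing A] [CommRing B] [Algebra A B] [Module.Flat A B]
    {X Y Z : Type} [AddCommGroup X] [AddCommGroup Y]
    [AddCommGroup Z] [Module A X] [Module A Y] [Module A Z] {f : X →ₗ[A] Y} {g : Y →ₗ[A] Z}
    (hf : Function.Injective f) (hfg : Function.Exact f g) (hg : Function.Surjective g) :
    Function.Injective (f.baseChange B) ∧ Function.Exact (f.baseChange B) (g.baseChange B) ∧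
      Function.Surjective (g.baseChange B) :=
  ⟨Module.Flat.lTensor_preserves_injective_linearMap f hf, lTensor_exact B hfg hg,
    LinearMap.lTensor_surjective B hg⟩

/-- Flat base change does not increase the projective dimension. -/
lemma baseChange {A B : Type} [CommRing A] [CommRing B] [Algebra A B] [Module.Flat A B] (n : ℕ)
    (M : Type) [AddCommGroup M] [Module A M] (h : HasProjectiveDimensionLE (ModuleCat.of A M) n) :
    HasProjectiveDimensionLE (ModuleCat.of B (B ⊗[A] M)) n := by
  induction n generalizing M with
  | zero =>
    rw [← projective_iff_hasProjectiveDimensionLE_zero, ← IsProjective.iff_projective] at h ⊢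
    infer_instance
  | succ n ih =>
    let g : (M →₀ A) →ₗ[A] M := Finsupp.linearCombination A id
    have hg : Function.Surjective g := Finsupp.linearCombination_id_surjective A M
    let f : LinearMap.ker g →ₗ[A] (M →₀ A) := (LinearMap.ker g).subtype
    have hf : Function.Injective f := Subtype.val_injective
    have hfg : Function.Exact f g := LinearMap.exact_subtype_ker_map g
    have E := shortExact (X := LinearMap.ker g) (Y := M →₀ A) (Z := M) (f := f) (g := g) hf hfg hg
    obtain ⟨h₁, h₂, h₃⟩ := baseChange_exact (B := B) (X := LinearMap.ker g) (Y := M →₀ A)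
      (Z := M) (f := f) (g := g) hf hfg hg
    have E' := shortExact h₁ h₂ h₃
    have P : Projective (ModuleCat.of A (M →₀ A)) := by
      rw [← IsProjective.iff_projective]; infer_instance
    have P' : Projective (ModuleCat.of B (B ⊗[A] (M →₀ A))) := by
      rw [← IsProjective.iff_projective]; infer_instance
    exact (E'.hasProjectiveDimensionLT_X₃_iff n P').2
      (ih _ ((E.hasProjectiveDimensionLT_X₃_iff n P).1 h))

section poly

open scoped Polynomial

variable {A : Type} [CommRing A] (M : Type) [AddCommGroup M] [Module A M] [Module A[X] M]
  [IsScalarTower A A[X] M]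

/-- The action map `A[X] ⊗[A] M → M`, `p ⊗ m ↦ p • m`. -/
def ev : A[X] ⊗[A] M →ₗ[A[X]] M :=
  (LinearMap.id : M →ₗ[A] M).liftBaseChange A[X]

@[simp] lemma ev_tmul (p : A[X]) (m : M) : ev M (p ⊗ₜ[A] m) = p • m := by
  simp [ev]

/-- Multiplication by the variable on an `A[X]`-module, as an `A`-linear map. -/
def mulX : M →ₗ[A] M := Algebra.lsmul A A M (Polynomial.X : A[X])

/-- The map `p ⊗ m ↦ Xp ⊗ m - p ⊗ Xm`, whose cokernel is the action map `ev`. -/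
def diff : A[X] ⊗[A] M →ₗ[A[X]] A[X] ⊗[A] M :=
  (Polynomial.X : A[X]) • LinearMap.id - (mulX (A := A) M).baseChange A[X]

@[simp] lemma diff_tmul (p : A[X]) (m : M) :
    diff M (p ⊗ₜ[A] m) = (Polynomial.X * p) ⊗ₜ m - p ⊗ₜ[A] ((Polynomial.X : A[X]) • m) := by
  simp [diff, mulX, smul_tmul']

/-- Modulo the image of `diff`, every tensor `t` is congruent to `1 ⊗ ev t`. -/
lemma sub_mem (t : A[X] ⊗[A] M) :
    t - (1 : A[X]) ⊗ₜ[A] ev M t ∈ LinearMap.range (diff (A := A) M) := by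
  induction t with
  | zero => simp
  | add x y hx hy =>
    rw [map_add, tmul_add, add_sub_add_comm]; exact add_mem hx hy
  | tmul p m =>
    rw [ev_tmul]
    induction p using Polynomial.induction_on generalizing m with
    | C a =>
      have : (Polynomial.C a : A[X]) = a • 1 := by simp [Polynomial.smul_eq_C_mul]
      rw [this, smul_tmul, smul_assoc, one_smul, sub_self]
      exact zero_mem _
    | add p q hp hq =>
      rw [add_smul, tmul_add, add_tmul, add_sub_add_comm]; exact add_mem (hp m) (hq m)
    | monomial n a ih =>
      have h := add_mem (LinearMap.mem_range_self (diff (A := A) M)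
        ((Polynomial.C a * Polynomial.X ^ n) ⊗ₜ m)) (ih ((Polynomial.X : A[X]) • m))
      rw [diff_tmul] at h
      convert h using 1
      rw [smul_smul, show (Polynomial.C a * Polynomial.X ^ (n + 1) : A[X]) =
          Polynomial.C a * Polynomial.X ^ n * Polynomial.X by ring,
        mul_comm Polynomial.X (Polynomial.C a * Polynomial.X ^ n)]
      abel

lemma exact_diff_ev : Function.Exact (diff (A := A) M) (ev (A := A) M) := by
  intro t
  constructor
  · intro h
    have := sub_mem M t
    rwa [h, tmul_zero, sub_zero] at this
  · rintro ⟨s, rfl⟩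
    induction s with
    | zero => simp
    | add x y hx hy => simp [hx, hy]
    | tmul p m => simp [smul_smul, mul_comm]

/-- The `n`-th coefficient of an element of `A[X] ⊗[A] M`, seen as a polynomial with coefficients
in `M`. -/
def cf (n : ℕ) : A[X] ⊗[A] M →ₗ[A] M :=
  TensorProduct.lift ((LinearMap.lsmul A M).comp (Polynomial.lcoeff A n))

@[simp] lemma cf_tmul (n : ℕ) (p : A[X]) (m : M) : cf M n (p ⊗ₜ[A] m) = p.coeff n • m := rfl

lemma cf_diff (n : ℕ) (t : A[X] ⊗[A] M) :
    cf M (n + 1) (diff M t) = cf M n t - (Polynomial.X : A[X]) • cf M (n + 1) t := by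
  induction t with
  | zero => simp
  | add x y hx hy => simp only [map_add, hx, hy, smul_add]; abel
  | tmul p m =>
    rw [diff_tmul, map_sub, cf_tmul, cf_tmul, cf_tmul, cf_tmul, Polynomial.coeff_X_mul,
      algebra_compatible_smul A[X] (p.coeff (n + 1)), smul_comm, ← algebra_compatible_smul]

/-- An element of `A[X] ⊗[A] M` is determined by its coefficients, finitely many of which are
nonzero. -/
lemma eq_sum (t : A[X] ⊗[A] M) : ∃ N, ∀ n, N ≤ n →
    t = ∑ i ∈ Finset.range n, (Polynomial.X ^ i : A[X]) ⊗ₜ[A] cf M i t ∧ cf M n t = 0 := by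
  induction t with
  | zero => exact ⟨0, fun n _ => by simp⟩
  | add x y hx hy =>
    obtain ⟨a, ha⟩ := hx
    obtain ⟨b, hb⟩ := hy
    refine ⟨max a b, fun n hn => ?_⟩
    obtain ⟨h1, h2⟩ := ha n (le_trans (le_max_left _ _) hn)
    obtain ⟨h3, h4⟩ := hb n (le_trans (le_max_right _ _) hn)
    refine ⟨?_, by simp [h2, h4]⟩
    simp only [map_add, tmul_add, Finset.sum_add_distrib, ← h1, ← h3]
  | tmul p m =>
    refine ⟨p.natDegree + 1, fun n hn => ⟨?_, ?_⟩⟩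
    · conv_lhs => rw [Polynomial.as_sum_range' p n hn, sum_tmul]
      refine Finset.sum_congr rfl fun i _ => ?_
      rw [cf_tmul, ← smul_tmul, Polynomial.smul_eq_C_mul, Polynomial.C_mul_X_pow_eq_monomial]
    · simp [Polynomial.coeff_eq_zero_of_natDegree_lt hn]

lemma diff_injective : Function.Injective (diff (A := A) M) := by
  rw [injective_iff_map_eq_zero]
  intro t ht
  obtain ⟨N, hN⟩ := eq_sum M t
  -- `cf_diff` shows that the vanishing of the coefficient `n + 1` implies that of the `n`-th.
  have key : ∀ k n, N ≤ n + k → cf M n t = 0 := by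
    intro k
    induction k with
    | zero => exact fun n hn => (hN n hn).2
    | succ k ih =>
      intro n hn
      have := cf_diff M n t
      rwa [ht, map_zero, ih (n + 1) (by omega), smul_zero, sub_zero, eq_comm] at this
  rw [(hN N le_rfl).1]
  exact Finset.sum_eq_zero fun i _ => by rw [key N i (by omega), tmul_zero]

end poly

open scoped Polynomial in
/-- The inductive step of the Hilbert syzygy theorem: `0 → A[X] ⊗ M → A[X] ⊗ M → M → 0` is exact,
and the projective dimension of `A[X] ⊗[A] M` is at most that of `M` over `A`. -/
lemma polynomial {A : Type} [CommRing A] {n : ℕ} (h : GlDimLE A n) : GlDimLE A[X] (n + 1) := by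
  intro M
  let : Module A M := Module.compHom M (Polynomial.C : A →+* A[X])
  have : IsScalarTower A A[X] M := ⟨fun a p m => by
    rw [Polynomial.smul_eq_C_mul, mul_smul]; rfl⟩
  have E := shortExact (diff_injective (A := A) M) (exact_diff_ev M)
    (fun m => ⟨1 ⊗ₜ m, by simp⟩)
  have hB := baseChange (B := A[X]) n M (h (.of A M))
  exact E.hasProjectiveDimensionLT_X₃ (n + 1) hB
    (@hasProjectiveDimensionLT_of_ge _ _ _ _ (n + 1) (n + 2) (by omega) hB)

lemma mvPolynomial (k : Type) [Field k] (n : ℕ) : GlDimLE (MvPolynomial (Fin n) k) n := by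
  induction n with
  | zero => exact of_ringEquiv (MvPolynomial.isEmptyRingEquiv k (Fin 0)).symm (of_field k)
  | succ n ih => exact of_ringEquiv (MvPolynomial.finSuccEquiv k n).symm.toRingEquiv (polynomial ih)

/-- A kernel of a map between projective modules is a second syzygy of its cokernel. -/
lemma ker_le {A : Type} [CommRing A] {n : ℕ} (h : GlDimLE A (n + 2)) {P Q : Type} [AddCommGroup P]
    [AddCommGroup Q] [Module A P] [Module A Q] [Module.Projective A P] [Module.Projective A Q]
    (g : P →ₗ[A] Q) : HasProjectiveDimensionLE (ModuleCat.of A (LinearMap.ker g)) n := by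
  have E₁ := shortExact (f := (LinearMap.ker g).subtype) (g := g.rangeRestrict)
    Subtype.val_injective (by
      rw [LinearMap.exact_iff, LinearMap.ker_rangeRestrict, Submodule.range_subtype])
    g.surjective_rangeRestrict
  have E₂ := shortExact (f := (LinearMap.range g).subtype) (g := (LinearMap.range g).mkQ)
    Subtype.val_injective (LinearMap.exact_subtype_mkQ _) (Submodule.mkQ_surjective _)
  have hP : Projective (ModuleCat.of A P) := by
    rwa [← IsProjective.iff_projective]
  have hQ : Projective (ModuleCat.of A Q) := by
    rwa [← IsProjective.iff_projective]
  exact (E₁.hasProjectiveDimensionLT_X₃_iff n hP).1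
    ((E₂.hasProjectiveDimensionLT_X₃_iff (n + 1) hQ).1 (h _))

/-- For a presentation `A^b → A^a → R* → 0`, dualizing identifies `R** ≅ R` with the kernel of
`(A^a)* → (A^b)*`, so `R` is a second syzygy. -/
lemma reflexive {A : Type} [CommRing A] [IsNoetherianRing A] {n : ℕ} (h : GlDimLE A (n + 2))
    (R : Type) [AddCommGroup R] [Module A R] [Module.Finite A R]
    (hrefl : Function.Bijective (Module.Dual.eval A R)) :
    HasProjectiveDimensionLE (ModuleCat.of A R) n := by
  obtain ⟨a, π, hπ⟩ := Module.Finite.exists_fin' A (Module.Dual A R)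
  obtain ⟨b, φ, hφ⟩ := Module.Finite.exists_fin' A (LinearMap.ker π)
  let ψ := (LinearMap.ker π).subtype ∘ₗ φ
  have hex : Function.Exact ψ π := by
    rw [LinearMap.exact_iff, LinearMap.range_comp, LinearMap.range_eq_top.2 hφ,
      Submodule.map_top, Submodule.range_subtype]
  have := ker_le h ψ.dualMap
  let ι := π.dualMap ∘ₗ Module.Dual.eval A R
  have hι : Function.Injective ι :=
    (LinearMap.dualMap_injective_of_surjective hπ).comp hrefl.1
  have hr : LinearMap.range ι = LinearMap.ker ψ.dualMap := by
    rw [LinearMap.range_comp, LinearMap.range_eq_top.2 hrefl.2, Submodule.map_top]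
    rw [LinearMap.range_dualMap_eq_dualAnnihilator_ker_of_surjective π hπ,
      LinearMap.ker_dualMap_eq_dualAnnihilator_range, LinearMap.exact_iff.1 hex]
  exact ModuleCat.hasProjectiveDimensionLE_of_linearEquiv
    (M := ModuleCat.of A (LinearMap.ker ψ.dualMap)) (N := ModuleCat.of A R)
    ((LinearEquiv.ofInjective ι hι).trans (LinearEquiv.ofEq _ _ hr)).symm n
end GlDim

/-! ### Homomorphisms from a projective module to a finite-dimensional one -/

namespace RankHom

/-- Over a domain the rank of a finite projective module is the same at all points, so it can be
computed after base change to any field. -/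
lemma finrank_eq_rankAtStalk {A L P : Type} [CommRing A] [IsDomain A] [Field L] [Algebra A L]
    [AddCommGroup P] [Module A P] [Module.Finite A P] [Module.Projective A P] :
    Module.finrank L (L ⊗[A] P) = Module.rankAtStalk (R := A) P ⊥ := by
  have h := congrFun (Module.rankAtStalk_eq_finrank_of_free (R := L) (M := L ⊗[A] P)) ⊥
  rw [Module.rankAtStalk_baseChange] at h
  rw [Module.rankAtStalk_eq_of_le_of_finite_of_flat P (bot_le : ⊥ ≤ _)]
  exact h.symm

variable {k A P Q : Type} [Field k] [CommRing A] [IsDomain A] [Algebra k A]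
    [AddCommGroup P] [Module A P] [Module.Finite A P] [Module.Projective A P]
    [AddCommGroup Q] [Module A Q] [Module k Q] [IsScalarTower k A Q] [FiniteDimensional k Q]

/-- The quotient `A / ann Q` acts faithfully on `Q`, so it embeds in `End_k(Q)`. -/
lemma finite_quot (k A Q : Type) [Field k] [CommRing A] [Algebra k A]
    [AddCommGroup Q] [Module A Q] [Module k Q] [IsScalarTower k A Q] [FiniteDimensional k Q] :
    Module.Finite k (A ⧸ Module.annihilator A Q) := by
  let φ : A →ₗ[k] Module.End k Q := (Algebra.lsmul k k Q).toLinearMap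
  have h : ((Module.annihilator A Q).restrictScalars k) = LinearMap.ker φ := by
    ext a
    simp [φ, Module.mem_annihilator, LinearMap.ext_iff]
  let ψ : (A ⧸ Module.annihilator A Q) →ₗ[k] Module.End k Q :=
    ((Module.annihilator A Q).restrictScalars k).liftQ φ h.le
  refine Module.Finite.of_injective ψ ?_
  rw [← LinearMap.ker_eq_bot]
  exact Submodule.ker_liftQ_eq_bot' _ _ h

/-- `B ⊗[A] P` is free over the semilocal ring `B = A / ann Q`, and
`Hom_A(P, Q) = Hom_B(B ⊗[A] P, Q)`. -/
lemma exists_equiv (k : Type) [Field k] [Algebra k A] [Module k Q] [IsScalarTower k A Q]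
    [FiniteDimensional k Q] :
    Nonempty ((P →ₗ[A] Q) ≃ₗ[A] (Fin (Module.rankAtStalk (R := A) P ⊥) → Q)) := by
  let J := Module.annihilator A Q
  let B := A ⧸ J
  have := finite_quot k A Q
  have : IsArtinianRing B := IsArtinianRing.of_finite k B
  let : Module B Q := Module.quotientAnnihilator
  have : IsScalarTower A B Q := inferInstance
  obtain ⟨b⟩ := Module.nonempty_basis_of_flat_of_finrank_eq B (B ⊗[A] P)
    (Module.rankAtStalk (R := A) P ⊥) (fun m => by
      let := Ideal.Quotient.field m.1
      rw [← finrank_eq_rankAtStalk (L := B ⧸ m.1)]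
      exact (AlgebraTensorModule.cancelBaseChange A B (B ⧸ m.1) (B ⧸ m.1) P).finrank_eq)
  exact ⟨(LinearMap.liftBaseChangeEquiv (R := A) (M := P) (N := Q) B).restrictScalars A ≪≫ₗ
    ((b.constr B).symm.restrictScalars A)⟩

end RankHom

/-! ### Dimension count -/

namespace Assemble

lemma finrank_four {k U V W E : Type*} [Field k] [AddCommGroup U] [AddCommGroup V]
    [AddCommGroup W] [AddCommGroup E] [Module k U] [Module k V] [Module k W] [Module k E]
    [FiniteDimensional k V] [FiniteDimensional k W] (a : U →ₗ[k] V) (b : V →ₗ[k] W)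
    (c : W →ₗ[k] E) (ha : Function.Injective a) (hab : Function.Exact a b)
    (hbc : Function.Exact b c) (hc : Function.Surjective c) :
    Module.finrank k U + Module.finrank k W = Module.finrank k V + Module.finrank k E := by
  have h₁ := b.finrank_range_add_finrank_ker
  have h₂ := c.finrank_range_add_finrank_ker
  rw [LinearMap.exact_iff.1 hab, LinearMap.finrank_range_of_inj ha] at h₁
  rw [LinearMap.exact_iff.1 hbc, LinearMap.range_eq_top.2 hc, finrank_top] at h₂
  omega

/-- Additivity of the rank in a short exact sequence, for a flat base change to a field `L`. -/
lemma finrank_rank {A L X Y Z : Type} [CommRing A] [Field L] [Algebra A L] [Module.Flat A L]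
    [AddCommGroup X] [AddCommGroup Y] [AddCommGroup Z] [Module A X] [Module A Y] [Module A Z]
    [Module.Finite A Y] {f : X →ₗ[A] Y} {g : Y →ₗ[A] Z} (hf : Function.Injective f)
    (hfg : Function.Exact f g) (hg : Function.Surjective g) :
    Module.finrank L (L ⊗[A] X) + Module.finrank L (L ⊗[A] Z) = Module.finrank L (L ⊗[A] Y) := by
  obtain ⟨h₁, h₂, h₃⟩ := GlDim.baseChange_exact (B := L) hf hfg hg
  have h := (g.baseChange L).finrank_range_add_finrank_ker
  rw [LinearMap.exact_iff.1 h₂, LinearMap.finrank_range_of_inj h₁, LinearMap.range_eq_top.2 h₃,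
    finrank_top] at h
  omega

/-- The dimension count for an exact sequence `0 → U → V → W → E → 0` of `A`-modules with
`V ≅ Q^m` and `W ≅ Q^n`. -/
lemma finrank_four_restrictScalars (k : Type) {A U V W E Q : Type} [Field k] [CommRing A]
    [Algebra k A] [AddCommGroup U] [AddCommGroup V] [AddCommGroup W] [AddCommGroup E]
    [AddCommGroup Q] [Module A U] [Module A V] [Module A W] [Module A E] [Module A Q] [Module k Q]
    [IsScalarTower k A Q] [FiniteDimensional k Q] {m n : ℕ} (eV : V ≃ₗ[A] (Fin m → Q))
    (eW : W ≃ₗ[A] (Fin n → Q)) (a : U →ₗ[A] V) (b : V →ₗ[A] W) (c : W →ₗ[A] E)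
    (ha : Function.Injective a) (hab : Function.Exact a b) (hbc : Function.Exact b c)
    (hc : Function.Surjective c) :
    Module.finrank k (RestrictScalars k A U) + n * Module.finrank k Q =
      m * Module.finrank k Q + Module.finrank k (RestrictScalars k A E) := by
  let : Module k U := Module.compHom U (algebraMap k A)
  let : Module k V := Module.compHom V (algebraMap k A)
  let : Module k W := Module.compHom W (algebraMap k A)
  let : Module k E := Module.compHom E (algebraMap k A)
  have : IsScalarTower k A U := IsScalarTower.of_compHom k A U
  have : IsScalarTower k A V := IsScalarTower.of_compHom k A V
  have : IsScalarTower k A W := IsScalarTower.of_compHom k A W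
  have : IsScalarTower k A E := IsScalarTower.of_compHom k A E
  have : FiniteDimensional k V := Module.Finite.equiv (eV.restrictScalars k).symm
  have : FiniteDimensional k W := Module.Finite.equiv (eW.restrictScalars k).symm
  have dV := (eV.restrictScalars k).finrank_eq
  have dW := (eW.restrictScalars k).finrank_eq
  rw [Module.finrank_pi_fintype, Finset.sum_const, Finset.card_fin, smul_eq_mul] at dV dW
  rw [← dV, ← dW]
  -- The `k`-module structures chosen above are by definition those of `RestrictScalars k A _`.
  have key := finrank_four (a.restrictScalars k) (b.restrictScalars k) (c.restrictScalars k)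
    ha hab hbc hc
  exact key

/-- The vanishing of Ext and the dimension formula, for a module of projective dimension at most
one over a Noetherian domain that is an algebra over a field. -/
theorem main {k A : Type} [Field k] [CommRing A] [IsDomain A] [IsNoetherianRing A] [Algebra k A]
    (R Q : Type) [AddCommGroup R] [Module A R] [Module.Finite A R]
    (hR : HasProjectiveDimensionLE (ModuleCat.of A R) 1)
    [AddCommGroup Q] [Module A Q] [Module k Q] [IsScalarTower k A Q] [FiniteDimensional k Q] :
    (∀ i : ℕ, 2 ≤ i → Subsingleton (((Ext A (ModuleCat A) i).obj
        (Opposite.op (ModuleCat.of A R))).obj (ModuleCat.of A Q))) ∧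
    Module.finrank k (RestrictScalars k A (R →ₗ[A] Q)) =
      Module.finrank (FractionRing A) (FractionRing A ⊗[A] R) * Module.finrank k Q +
      Module.finrank k (RestrictScalars k A (((Ext A (ModuleCat A) 1).obj
        (Opposite.op (ModuleCat.of A R))).obj (ModuleCat.of A Q))) := by
  obtain ⟨n, g, hg⟩ := Module.Finite.exists_fin' A R
  let X := LinearMap.ker g
  let f : X →ₗ[A] (Fin n → A) := X.subtype
  have hf : Function.Injective f := Subtype.val_injective
  have hfg : Function.Exact f g := LinearMap.exact_subtype_ker_map g
  have hT := GlDim.shortExact hf hfg hg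
  have hF : Projective (ModuleCat.of A (Fin n → A)) := by
    rw [← IsProjective.iff_projective]; infer_instance
  have hX : Projective (ModuleCat.of A X) := by
    rw [projective_iff_hasProjectiveDimensionLE_zero]
    exact (hT.hasProjectiveDimensionLT_X₃_iff 0 hF).1 hR
  have hX' : Module.Projective A X := (IsProjective.iff_projective _).2 hX
  refine ⟨fun i hi => ?_, ?_⟩
  · obtain ⟨m, rfl⟩ := Nat.exists_eq_add_of_le' hi
    exact ModuleCat.subsingleton_of_isZero (TwoTerm.isZero_ext _ hT hX hF _ m)
  · obtain ⟨δ, hδ, hker⟩ := TwoTerm.exists_ext_one (A := A) _ hT hX hF (ModuleCat.of A Q)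
    obtain ⟨eX⟩ := RankHom.exists_equiv (A := A) (P := X) (Q := Q) k
    obtain ⟨eF⟩ := RankHom.exists_equiv (A := A) (P := Fin n → A) (Q := Q) k
    rw [← RankHom.finrank_eq_rankAtStalk (L := FractionRing A)] at eX eF
    let δ' : (X →ₗ[A] Q) →ₗ[A] ((Ext A (ModuleCat A) 1).obj
        (Opposite.op (ModuleCat.of A R))).obj (ModuleCat.of A Q) :=
      δ ∘ₗ (ModuleCat.homLinearEquiv (S := A) (M := ModuleCat.of A X)
        (N := ModuleCat.of A Q)).symm.toLinearMap
    have hδ' : Function.Surjective δ' := hδ.comp (LinearEquiv.surjective _)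
    have hab : Function.Exact (LinearMap.lcomp A Q g) (LinearMap.lcomp A Q f) :=
      LinearMap.exact_lcomp_of_exact_of_surjective Q hfg hg
    -- Under `Hom_A(M, N) ≃ (of M ⟶ of N)`, `hker` is the exactness at `Hom(X, Q)`.
    have hbc : Function.Exact (LinearMap.lcomp A Q f) δ' := by
      intro φ
      have h : δ' φ = 0 ↔ ModuleCat.ofHom φ ∈ LinearMap.ker δ := Iff.rfl
      rw [h, hker]
      constructor
      · rintro ⟨ψ, hψ⟩
        exact ⟨ψ.hom, congrArg ModuleCat.Hom.hom hψ⟩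
      · rintro ⟨ψ, rfl⟩
        exact ⟨ModuleCat.ofHom ψ, rfl⟩
    have key := finrank_four_restrictScalars k eF eX (LinearMap.lcomp A Q g)
      (LinearMap.lcomp A Q f) δ' (LinearMap.lcomp_injective_of_surjective g hg) hab hbc hδ'
    have rk := finrank_rank (L := FractionRing A) hf hfg hg
    rw [← rk, add_mul] at key
    refine Nat.add_right_cancel (key.trans ?_)
    rw [add_assoc, add_comm]

end Assemble

/-- Let `R` be a finitely generated reflexive `S`-module of rank `r` and `Q` a finitely
generated `S`-module of finite length (finite-dimensional over `ℂ`).  Then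
`Ext^i_S(R,Q) = 0` for `i ≥ 2` and
`dim_ℂ Hom_S(R,Q) − dim_ℂ Ext¹_S(R,Q) = r · dim_ℂ Q`. -/
theorem hom_ext_dimension_difference
    (R : Type) [AddCommGroup R] [Module S R] [Module.Finite S R]
    (hrefl : Function.Bijective (Module.Dual.eval S R))
    (r : ℕ) (hr : Module.finrank (FractionRing S) (FractionRing S ⊗[S] R) = r)
    (Q : Type) [AddCommGroup Q] [Module S Q] [Module.Finite S Q]
    [Module ℂ Q] [IsScalarTower ℂ S Q] [FiniteDimensional ℂ Q] :
    (∀ i : ℕ, 2 ≤ i →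
      Subsingleton (((Ext S (ModuleCat S) i).obj
        (Opposite.op (ModuleCat.of S R))).obj (ModuleCat.of S Q))) ∧
    (Module.finrank ℂ (RestrictScalars ℂ S (R →ₗ[S] Q)) : ℤ) -
      (Module.finrank ℂ (RestrictScalars ℂ S (((Ext S (ModuleCat S) 1).obj
        (Opposite.op (ModuleCat.of S R))).obj (ModuleCat.of S Q))) : ℤ) =
      r * Module.finrank ℂ Q := by
  obtain ⟨h₁, h₂⟩ := Assemble.main (k := ℂ) R Q
    (GlDim.reflexive (n := 1) (GlDim.mvPolynomial ℂ 3) R hrefl)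
  refine ⟨h₁, ?_⟩
  rw [h₂, hr]
  push_cast
  ring
end
end

section
/- Let R be a finitely generated reflexive S-module of rank 2. If there exists a surjective S-linear map R → S, then R is a free S-module (isomorphic to S²). -/
/-!
A surjection `f : R → S` splits, so `R ≅ ker f × S`, and `N = ker f` is a finitely generated
module of rank `1`, reflexive because it is a direct summand of the reflexive module `R`. It
remains to see that such an `N` is free, which holds over any unique factorization domain `A`
(`nonempty_linearEquiv_of_isReflexive_of_finrank_eq_one`).

Since `N` embeds in its double dual, it has a nonzero functional, which is injective because `N` is
torsion-free of rank `1`. Dividing it by the gcd of its values on a finite generating set gives an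
injective functional `h` such that no nonunit divides all values of `h`
(`exists_injective_primitive_functional`). For any other functional `φ`, injectivity of `h` gives
`φ n * h m = φ m * h n` for all `m`, `n`. If `h n ≠ 0` then `h n` divides every `φ n * h m`, hence
divides `φ n`, so that `φ` is a multiple of `h`. Thus `h` is a basis of the dual of `N`, and
`N ≅ N** ≅ A* ≅ A`.
-/

open MvPolynomial TensorProduct

noncomputable section

section RankOne

variable {A N : Type*} [CommRing A] [IsDomain A] [AddCommGroup N] [Module A N]

/-- The divisibility clause expresses that the values of `h` have gcd `1`. -/
lemma exists_injective_primitive_functional [UniqueFactorizationMonoid A] [Module.Finite A N]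
    [Module.IsReflexive A N] (hN : Module.finrank A N = 1) :
    ∃ h : N →ₗ[A] A, Function.Injective h ∧ ∀ a c : A, (∀ n, a ∣ c * h n) → a ∣ c := by
  classical
  obtain ⟨_⟩ : Nonempty (NormalizedGCDMonoid A) := inferInstance
  have : Nontrivial N := Module.nontrivial_of_finrank_pos (R := A) (by omega)
  obtain ⟨x, hx⟩ := exists_ne (0 : N)
  obtain ⟨g, hg⟩ : ∃ g : N →ₗ[A] A, g x ≠ 0 := by
    by_contra! H
    exact hx ((Module.bijective_dual_eval A N).1 (LinearMap.ext fun g => by simpa using H g))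
  have hginj : Function.Injective g := by
    rw [← LinearMap.ker_eq_bot]
    have hle : Module.finrank A (⊤ : Submodule A N) ≤
        Module.finrank A ((⊤ : Submodule A N).map g) := by
      rw [finrank_top, hN, Nat.succ_le_iff, Module.finrank_pos_iff]
      exact ⟨⟨⟨g x, x, trivial, rfl⟩, 0, fun h => hg (congrArg Subtype.val h)⟩⟩
    exact (Submodule.disjoint_ker_of_finrank_le g hle).eq_bot_of_ge le_top
  obtain ⟨s, hs⟩ := (Module.Finite.fg_top : (⊤ : Submodule A N).FG)
  have hne : s.Nonempty := by
    rw [Finset.nonempty_iff_ne_empty]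
    rintro rfl
    have : x ∈ (⊤ : Submodule A N) := trivial
    rw [← hs] at this
    exact hx (by simpa using this)
  obtain ⟨k, hk, hk1⟩ := Finset.extract_gcd g hne
  set d := s.gcd g with hd
  have hdvd : ∀ n, d ∣ g n := by
    intro n
    have hn : n ∈ Submodule.span A (s : Set N) := hs ▸ trivial
    induction hn using Submodule.span_induction with
    | mem y hy => exact Finset.gcd_dvd hy
    | zero => simp
    | add y z _ _ hy hz => rw [map_add]; exact dvd_add hy hz
    | smul a y _ hy => rw [map_smul]; exact hy.mul_left a
  have hd0 : d ≠ 0 := fun h0 => hg (by simpa [h0] using hdvd x)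
  choose h hh using hdvd
  let h' : N →ₗ[A] A :=
    { toFun := h
      map_add' := fun y z => mul_left_cancel₀ hd0 (by rw [mul_add, ← hh, ← hh, ← hh, map_add])
      map_smul' := fun a y => mul_left_cancel₀ hd0 (by
        rw [← hh, map_smul, hh, smul_eq_mul, RingHom.id_apply, smul_eq_mul]; ring) }
  refine ⟨h', fun y z hyz => hginj ?_, fun a c hac => ?_⟩
  · rw [hh, hh]; exact congrArg (d * ·) hyz
  · have hgcd : a ∣ s.gcd fun n => c * k n := Finset.dvd_gcd fun n hn => by
      have hkn : k n = h' n := mul_left_cancel₀ hd0 (by rw [← hk n hn]; exact hh n)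
      rw [hkn]; exact hac n
    simpa [hk1] using hgcd.trans (Finset.gcd_mul_left' s k c).dvd

lemma nonempty_linearEquiv_of_isReflexive_of_finrank_eq_one [UniqueFactorizationMonoid A]
    [Module.Finite A N] [Module.IsReflexive A N] (hN : Module.finrank A N = 1) :
    Nonempty (N ≃ₗ[A] A) := by
  obtain ⟨h, hinj, hprim⟩ := exists_injective_primitive_functional hN
  have : Nontrivial N := Module.nontrivial_of_finrank_pos (R := A) (by omega)
  obtain ⟨x, hx⟩ := exists_ne (0 : N)
  have hx0 : h x ≠ 0 := fun h0 => hx (hinj (by simpa using h0))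
  have hcross (φ : N →ₗ[A] A) (m n : N) : φ n * h m = φ m * h n := by
    have : h m • n = h n • m := hinj (by simp [mul_comm])
    simpa [mul_comm] using congrArg φ this
  have hbij : Function.Bijective (LinearMap.toSpanSingleton A (Module.Dual A N) h) := by
    constructor
    · intro a b hab
      exact mul_right_cancel₀ hx0 (by simpa using LinearMap.congr_fun hab x)
    · intro φ
      obtain ⟨c, hc⟩ := hprim (h x) (φ x) fun m => ⟨φ m, by rw [hcross, mul_comm]⟩
      refine ⟨c, LinearMap.ext fun n => mul_right_cancel₀ hx0 ?_⟩
      rw [hcross φ x n, hc]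
      simp only [LinearMap.toSpanSingleton_apply, LinearMap.smul_apply, smul_eq_mul]
      ring
  let e := LinearEquiv.ofBijective _ hbij
  exact ⟨(Module.evalEquiv A N).trans (e.dualMap.trans (LinearMap.ringLmapEquivSelf A A A))⟩

end RankOne

/-- A finitely generated reflexive `S`-module of rank 2 admitting a surjection onto `S`
is free (isomorphic to `S²`). -/
theorem free_of_reflexive_rank_two_with_surjective_cosection
    (R : Type) [AddCommGroup R] [Module S R] [Module.Finite S R]
    (hrefl : Function.Bijective (Module.Dual.eval S R))
    (hrk : Module.finrank (FractionRing S) (FractionRing S ⊗[S] R) = 2)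
    (f : R →ₗ[S] S) (hf : Function.Surjective f) :
    Nonempty (R ≃ₗ[S] (Fin 2 → S)) := by
  have : Module.IsReflexive S R := ⟨hrefl⟩
  obtain ⟨r, hr⟩ := hf 1
  -- The projection `y ↦ y - f y • r` of `R` onto `ker f`.
  let p : R →ₗ[S] LinearMap.ker f :=
    (LinearMap.id - f.smulRight r).codRestrict _ fun y => by simp [hr]
  have hp : p ∘ₗ (LinearMap.ker f).subtype = .id := by
    refine LinearMap.ext fun y => Subtype.ext ?_
    have hy : f y = 0 := y.2
    change (y : R) - f y • r = y
    rw [hy, zero_smul, sub_zero]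
  have : Module.IsReflexive S (LinearMap.ker f) := .of_split _ _ hp
  have hrkS : Module.finrank S R = 2 := by
    rw [← hrk, IsFractionRing.finrank_right_eq S (FractionRing S)]
    exact (IsLocalizedModule.finrank_eq (nonZeroDivisors S)
      (TensorProduct.mk S (FractionRing S) R 1) le_rfl).symm
  have hker : Module.finrank S (LinearMap.ker f) = 1 := by
    have h1 := (LinearMap.ker f).finrank_quotient_add_finrank
    rw [(f.quotKerEquivOfSurjective hf).finrank_eq, Module.finrank_self, hrkS] at h1
    omega
  obtain ⟨e⟩ := nonempty_linearEquiv_of_isReflexive_of_finrank_eq_one hker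
  have hbij : Function.Bijective (p.prod f) := by
    constructor
    · rw [← LinearMap.ker_eq_bot, LinearMap.ker_eq_bot']
      intro y hy
      have h1 : y - f y • r = 0 := congrArg (fun q => (q.1 : R)) hy
      have h2 : f y = 0 := congrArg Prod.snd hy
      simpa [h2] using h1
    · rintro ⟨n, a⟩
      have hn : f n = 0 := n.2
      refine ⟨n + a • r, Prod.ext (Subtype.ext ?_) (by simp [hr, hn])⟩
      change (n + a • r : R) - f (n + a • r) • r = n
      simp [hr, hn]
  exact ⟨(LinearEquiv.ofBijective _ hbij).trans
    ((e.prodCongr (.refl S S)).trans (LinearEquiv.finTwoArrow S S).symm)⟩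
end
end

section
/- Let a, b, c be positive integers and let p be a prime ideal of S that does not contain the ideal (x, y, z). Then the localization R(a,b,c)_p is a free S_p-module of rank 2. -/
/-!
The generator `v = (z^c, y^b, x^a)` has an entry that becomes a unit in `S_p`: as `p` does not
contain `(x, y, z)`, some variable, hence some power of it, lies outside `p`. If the entry `v i` is
a unit, then `v` together with the standard basis vectors `e_j`, `j ≠ i`, is a basis of `S_p³`, so
the quotient by `v` is free on the two remaining basis vectors.

This is carried out for a submonoid `M` of nonzerodivisors of a commutative ring and a vector
of length `n + 1` (`isLocalizedModule_quotMap`): the map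
`w ↦ (w j - (v j / v i) * w i)_{j ≠ i}` from the quotient to `T ^ n`, where `T` is the
localization, is itself a localization of modules, and the universal property then identifies the
localized quotient with `T ^ n`.
-/


open MvPolynomial

noncomputable section

section General

variable {A : Type*} [CommRing A] (M : Submonoid A) {n : ℕ} (v : Fin (n + 1) → A)
  (i : Fin (n + 1)) (hi : v i ∈ M)

/-- The linear map `w ↦ (w j - (v j / v i) * w i)_{j ≠ i}` from `A ^ (n + 1)` to the `n`-th power
of the localization of `A` at `M`, the indices `j ≠ i` being enumerated by `i.succAbove`. -/
def elimMap : (Fin (n + 1) → A) →ₗ[A] (Fin n → Localization M) :=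
  LinearMap.pi fun k =>
    Algebra.linearMap A (Localization M) ∘ₗ LinearMap.proj (i.succAbove k) -
      IsLocalization.mk' (Localization M) (v (i.succAbove k)) ⟨v i, hi⟩ •
        (Algebra.linearMap A (Localization M) ∘ₗ LinearMap.proj i)

lemma elimMap_apply (w : Fin (n + 1) → A) (k : Fin n) :
    elimMap M v i hi w k = algebraMap A (Localization M) (w (i.succAbove k)) -
      IsLocalization.mk' (Localization M) (v (i.succAbove k)) ⟨v i, hi⟩ *
        algebraMap A (Localization M) (w i) := rfl

lemma algebraMap_mul_elimMap (w : Fin (n + 1) → A) (k : Fin n) :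
    algebraMap A (Localization M) (v i) * elimMap M v i hi w k =
      algebraMap A (Localization M) (v i * w (i.succAbove k) - v (i.succAbove k) * w i) := by
  have h := IsLocalization.mk'_spec' (Localization M) (v (i.succAbove k)) (⟨v i, hi⟩ : M)
  rw [elimMap_apply, mul_sub, ← mul_assoc, h]
  simp only [map_sub, map_mul]

lemma span_le_ker_elimMap : Submodule.span A {v} ≤ LinearMap.ker (elimMap M v i hi) := by
  rw [Submodule.span_singleton_le_iff_mem, LinearMap.mem_ker]
  ext k
  rw [elimMap_apply, Pi.zero_apply, sub_eq_zero]
  exact (IsLocalization.mk'_spec (Localization M) (v (i.succAbove k)) (⟨v i, hi⟩ : M)).symm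

/-- The map induced by `elimMap` on the quotient of `A ^ (n + 1)` by `v`. -/
def quotMap : ((Fin (n + 1) → A) ⧸ Submodule.span A {v}) →ₗ[A] (Fin n → Localization M) :=
  (Submodule.span A {v}).liftQ (elimMap M v i hi) (span_le_ker_elimMap M v i hi)

lemma smul_mem_span_of_elimMap_eq_zero (hM : M ≤ nonZeroDivisors A) (w : Fin (n + 1) → A)
    (hw : elimMap M v i hi w = 0) : v i • w ∈ Submodule.span A {v} := by
  refine Submodule.mem_span_singleton.mpr ⟨w i, ?_⟩
  ext j
  simp only [Pi.smul_apply, smul_eq_mul]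
  rcases Fin.eq_self_or_eq_succAbove i j with rfl | ⟨k, rfl⟩
  · exact mul_comm _ _
  · have h := algebraMap_mul_elimMap M v i hi w k
    rw [hw, Pi.zero_apply, mul_zero] at h
    have h0 := IsLocalization.injective (Localization M) hM (h.symm.trans (map_zero _).symm)
    linear_combination -h0

lemma isLocalizedModule_quotMap (hM : M ≤ nonZeroDivisors A) :
    IsLocalizedModule M (quotMap M v i hi) where
  map_units s := by
    rw [Module.End.isUnit_iff]
    have hs := IsLocalization.map_units (Localization M) s
    refine ⟨fun x y hxy => ?_, fun y => ?_⟩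
    · ext k
      have := congrFun hxy k
      simp only [Module.algebraMap_end_apply, Pi.smul_apply, Algebra.smul_def] at this
      exact hs.mul_left_cancel this
    · refine ⟨fun k => hs.unit⁻¹ * y k, ?_⟩
      ext k
      simp [Algebra.smul_def, ← mul_assoc]
  surj y := by
    obtain ⟨s, hs⟩ := IsLocalization.exist_integer_multiples_of_finite M y
    choose w hw using hs
    -- With `i`-th entry zero, `elimMap` just returns the remaining entries.
    refine ⟨(Submodule.Quotient.mk (i.insertNth 0 w), s), ?_⟩
    ext k
    change _ = elimMap M v i hi _ k
    rw [elimMap_apply]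
    simp only [Fin.insertNth_apply_same, Fin.insertNth_apply_succAbove, map_zero, mul_zero,
      sub_zero]
    exact (hw k).symm
  exists_of_eq {x y} hxy := by
    refine ⟨⟨v i, hi⟩, ?_⟩
    rw [← sub_eq_zero, ← smul_sub]
    rw [← sub_eq_zero, ← map_sub] at hxy
    generalize x - y = z at hxy ⊢
    obtain ⟨w, rfl⟩ := Submodule.Quotient.mk_surjective _ z
    exact (Submodule.Quotient.mk_eq_zero _).mpr
      (smul_mem_span_of_elimMap_eq_zero M v i hi hM w hxy)

end General

/-- A quotient of `A ^ (n + 1)` by a vector with an entry in `M` is free of rank `n` after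
localizing at `M`. -/
lemma free_and_finrank_localized_quotient {A : Type*} [CommRing A] [Nontrivial A]
    (M : Submonoid A) {n : ℕ} (v : Fin (n + 1) → A) (i : Fin (n + 1)) (hi : v i ∈ M)
    (hM : M ≤ nonZeroDivisors A) :
    Module.Free (Localization M)
      (LocalizedModule M ((Fin (n + 1) → A) ⧸ Submodule.span A {v})) ∧
    Module.finrank (Localization M)
      (LocalizedModule M ((Fin (n + 1) → A) ⧸ Submodule.span A {v})) = n := by
  have := isLocalizedModule_quotMap M v i hi hM
  have : Nontrivial (Localization M) :=
    (IsLocalization.injective (Localization M) hM).nontrivial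
  let e := (IsLocalizedModule.iso M (quotMap M v i hi)).extendScalarsOfIsLocalization M
    (Localization M)
  exact ⟨Module.Free.of_equiv e.symm, by rw [e.finrank_eq, Module.finrank_fin_fun]⟩

/-- For every prime ideal `p` of `S` not containing `(x,y,z)`, the localization of
`R(a,b,c)` at `p` is a free module of rank 2 over `S_p`. -/
theorem Rabc_locally_free_away_from_origin (a b c : ℕ)
    (ha : 0 < a) (hb : 0 < b) (hc : 0 < c)
    (p : Ideal S) [p.IsPrime]
    (hp : ¬ Ideal.span {(X 0 : S), X 1, X 2} ≤ p) :
    Module.Free (Localization p.primeCompl)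
      (LocalizedModule p.primeCompl (Rabc a b c)) ∧
    Module.finrank (Localization p.primeCompl)
      (LocalizedModule p.primeCompl (Rabc a b c)) = 2 := by
  obtain ⟨i, hi⟩ : ∃ i, ![(X 2 : S) ^ c, (X 1 : S) ^ b, (X 0 : S) ^ a] i ∈ p.primeCompl := by
    by_contra! h
    have h0 : (X 2 : S) ^ c ∈ p := not_not.mp (h 0)
    have h1 : (X 1 : S) ^ b ∈ p := not_not.mp (h 1)
    have h2 : (X 0 : S) ^ a ∈ p := not_not.mp (h 2)
    have hprime : p.IsPrime := inferInstance
    refine hp (Ideal.span_le.mpr ?_)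
    rintro f (rfl | rfl | rfl)
    · exact hprime.mem_of_pow_mem _ h2
    · exact hprime.mem_of_pow_mem _ h1
    · exact hprime.mem_of_pow_mem _ h0
  exact free_and_finrank_localized_quotient p.primeCompl _ i hi p.primeCompl_le_nonZeroDivisors
end
end
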